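/- Coercivity of the Riesz fractional bilinear form in Fourier form: let α ∈ (1/2, 1) and u be smooth with compact support on ℝ. Then the quantity a(u,u) := 2 c_α ( {}_{-∞}D_x^{α} u, {}_xD_{∞}^{α} u )_{L^2(ℝ)} with c_α = 1/(2 cos(απ)) satisfies a(u,u) = ‖ {}_{-∞}D_x^{α} u ‖²_{L^2(ℝ)} ≥ 0, with equality iff u = 0. -/

import Mathlib

open MeasureTheory Set Real

/-- Left Riemann–Liouville fractional derivative of order `α ∈ (0,1)` on `ℝ`. -/
noncomputable def leftFracDerivR (α : ℝ) (u : ℝ → ℝ) (x : ℝ) : ℝ :=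
  (1 / Real.Gamma (1 - α)) *
    deriv (fun y => ∫ s in Set.Iic y, (y - s) ^ (-α) * u s) x

/-- Right Riemann–Liouville fractional derivative of order `α ∈ (0,1)` on `ℝ`. -/
noncomputable def rightFracDerivR (α : ℝ) (u : ℝ → ℝ) (x : ℝ) : ℝ :=
  -(1 / Real.Gamma (1 - α)) *
    deriv (fun y => ∫ s in Set.Ici y, (s - y) ^ (-α) * u s) x

open scoped Convolution FourierTransform

/-- tempered Abel kernel -/
noncomputable def abelK (α ε : ℝ) : ℝ → ℝ :=
  (Ioi (0:ℝ)).indicator (fun t => t ^ (-α) * Real.exp (-ε * t))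

noncomputable def abelP (α ε : ℝ) (v : ℝ → ℝ) : ℝ → ℝ :=
  convolution (abelK α ε) v (ContinuousLinearMap.mul ℝ ℝ) volume

lemma abelK_nonneg (α ε t : ℝ) : 0 ≤ abelK α ε t := by
  unfold abelK
  refine indicator_nonneg (fun t ht => ?_) t
  have : (0:ℝ) < t := ht
  positivity

lemma abelK_le (α : ℝ) {ε : ℝ} (hε : 0 ≤ ε) (t : ℝ) : abelK α ε t ≤ abelK α 0 t := by
  unfold abelK
  refine indicator_le_indicator' (fun ht => ?_)
  have : (0:ℝ) < t := ht
  have h2 : Real.exp (-ε * t) ≤ Real.exp (-0 * t) := by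
    apply Real.exp_le_exp.mpr; nlinarith
  exact mul_le_mul_of_nonneg_left h2 (by positivity)

lemma abelK_integrable {α ε : ℝ} (hα1 : α < 1) (hε : 0 < ε) : Integrable (abelK α ε) := by
  unfold abelK
  rw [integrable_indicator_iff measurableSet_Ioi]
  simpa using integrableOn_rpow_mul_exp_neg_mul_rpow (p := 1) (s := -α) (b := ε) (by linarith) one_pos hε

lemma abelK_locInt {α : ℝ} (hα1 : α < 1) (ε : ℝ) : LocallyIntegrable (abelK α ε) := by
  have h1 := (abelK_integrable hα1 one_pos).locallyIntegrable
  have h2 := h1.continuous_mul (g := fun t => Real.exp ((1 - ε) * t)) (by fun_prop)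
  refine h2.congr (Filter.Eventually.of_forall fun t => ?_)
  by_cases ht : t ∈ Ioi (0:ℝ)
  · simp only [abelK, ht, indicator_of_mem]
    rw [mul_left_comm, ← Real.exp_add]
    congr 2; ring
  · simp [abelK, ht]

lemma abelP_apply (α ε : ℝ) (v : ℝ → ℝ) (x : ℝ) :
    abelP α ε v x = ∫ t, abelK α ε t * v (x - t) := by
  simp [abelP, convolution_def]

lemma abelP_continuous {α : ℝ} (hα1 : α < 1) (ε : ℝ) {v : ℝ → ℝ} (hv : Continuous v)
    (hc : HasCompactSupport v) : Continuous (abelP α ε v) :=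
  hc.continuous_convolution_right _ (abelK_locInt hα1 ε) hv

lemma abelP_integrand {α : ℝ} (hα1 : α < 1) (ε : ℝ) {v : ℝ → ℝ} (hv : Continuous v)
    (hc : HasCompactSupport v) (x : ℝ) : Integrable (fun t => abelK α ε t * v (x - t)) := by
  have := (hc.convolutionExists_right (ContinuousLinearMap.mul ℝ ℝ) (abelK_locInt hα1 ε) hv) x
  simpa [ConvolutionExistsAt] using this

lemma abelP_eq_Iic (α : ℝ) (v : ℝ → ℝ) (y : ℝ) :
    ∫ s in Set.Iic y, (y - s) ^ (-α) * v s = abelP α 0 v y := by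
  rw [abelP_apply, ← integral_sub_left_eq_self _ volume y, integral_Iic_eq_integral_Iio,
    ← integral_indicator measurableSet_Iio]
  congr 1; ext s
  by_cases h : s < y
  · simp [abelK, h]
  · simp [abelK, h]

lemma abelP_eq_Ici (α : ℝ) (v : ℝ → ℝ) (y : ℝ) :
    ∫ s in Set.Ici y, (s - y) ^ (-α) * v s = abelP α 0 (fun x => v (-x)) (-y) := by
  rw [abelP_apply, ← integral_sub_right_eq_self (fun t => abelK α 0 t * v (-(-y - t))) y,
    integral_Ici_eq_integral_Ioi, ← integral_indicator measurableSet_Ioi]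
  congr 1; ext s
  by_cases h : y < s
  · simp [abelK, h]
  · simp [abelK, h]

lemma left_eq {α : ℝ} {u : ℝ → ℝ} (hα1 : α < 1)
    (hu : ContDiff ℝ (⊤ : ℕ∞) u) (hsupp : HasCompactSupport u) (x : ℝ) :
    leftFracDerivR α u x = (1 / Real.Gamma (1 - α)) * abelP α 0 (deriv u) x := by
  unfold leftFracDerivR
  congr 1
  simp_rw [abelP_eq_Iic]
  exact (hsupp.hasDerivAt_convolution_right _ (abelK_locInt hα1 0) (hu.of_le (by simp)) x).deriv

lemma right_eq {α : ℝ} {u : ℝ → ℝ} (hα1 : α < 1)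
    (hu : ContDiff ℝ (⊤ : ℕ∞) u) (hsupp : HasCompactSupport u) (x : ℝ) :
    rightFracDerivR α u x =
      -(1 / Real.Gamma (1 - α)) * abelP α 0 (fun y => deriv u (-y)) (-x) := by
  unfold rightFracDerivR
  simp_rw [abelP_eq_Ici]
  have hd : deriv (fun y => u (-y)) = fun y => - deriv u (-y) := by
    ext y; exact deriv_comp_neg u y
  have h1 : HasCompactSupport (fun y => u (-y)) := hsupp.comp_homeomorph (Homeomorph.neg ℝ)
  have h2 : ContDiff ℝ 1 (fun y => u (-y)) := (hu.of_le (by simp)).comp contDiff_neg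
  have h := (h1.hasDerivAt_convolution_right (ContinuousLinearMap.mul ℝ ℝ)
    (abelK_locInt hα1 0) h2 (-x)).deriv
  rw [deriv_comp_neg (abelP α 0 (fun x => u (-x))) x]
  unfold abelP at *
  rw [h, hd]
  congr 1
  simp [convolution_def, integral_neg]

lemma abelP_abs_le {α : ℝ} (hα1 : α < 1) {ε : ℝ} (hε : 0 ≤ ε) {v : ℝ → ℝ} (hv : Continuous v)
    (hc : HasCompactSupport v) (x : ℝ) : |abelP α ε v x| ≤ abelP α 0 (fun y => |v y|) x := by
  rw [abelP_apply, abelP_apply, ← Real.norm_eq_abs]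
  refine norm_integral_le_of_norm_le (abelP_integrand hα1 0 hv.abs hc.abs x)
    (Filter.Eventually.of_forall fun t => ?_)
  rw [norm_mul, Real.norm_of_nonneg (abelK_nonneg _ _ _)]
  exact mul_le_mul_of_nonneg_right (abelK_le α hε t) (abs_nonneg _)

lemma abelP_tendsto {α : ℝ} (hα1 : α < 1) {v : ℝ → ℝ} (hv : Continuous v)
    (hc : HasCompactSupport v) (x : ℝ) :
    Filter.Tendsto (fun ε => abelP α ε v x) (nhdsWithin 0 (Ioi 0)) (nhds (abelP α 0 v x)) := by
  simp_rw [abelP_apply]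
  refine tendsto_integral_filter_of_dominated_convergence _ 
    (Filter.Eventually.of_forall fun ε => (abelP_integrand hα1 ε hv hc x).aestronglyMeasurable) ?_
    (abelP_integrand hα1 0 hv.abs hc.abs x) ?_
  · filter_upwards [self_mem_nhdsWithin] with ε hε
    refine Filter.Eventually.of_forall fun t => ?_
    rw [norm_mul, Real.norm_of_nonneg (abelK_nonneg _ _ _)]
    exact mul_le_mul_of_nonneg_right (abelK_le α (le_of_lt hε) t) (abs_nonneg _)
  · refine Filter.Eventually.of_forall fun t => ?_
    have : Continuous (fun ε => abelK α ε t * v (x - t)) := by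
      by_cases ht : t ∈ Ioi (0:ℝ)
      · simp only [abelK, ht, indicator_of_mem]; fun_prop
      · simp only [abelK, ht, not_false_eq_true, indicator_of_notMem]; fun_prop
    exact (this.tendsto 0).mono_left nhdsWithin_le_nhds

/-- L² bound -/
lemma abelP_sq_integrable {α : ℝ} (hα0 : 1 / 2 < α) (hα1 : α < 1) {v : ℝ → ℝ} (hv : Continuous v)
    (hc : HasCompactSupport v) (hnn : ∀ x, 0 ≤ v x) :
    Integrable (fun x => (abelP α 0 v x) ^ 2) := by
  obtain ⟨R, hR0, hR⟩ := hc.exists_pos_le_norm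
  have hcont := abelP_continuous hα1 0 hv hc
  refine (hcont.pow 2).locallyIntegrable.integrable_of_isBigO_atBot_atTop 
    (g := fun _ => (0:ℝ)) (g' := fun x : ℝ => x ^ (-(2 * α))) ?_ ?_ ?_ ?_
  · refine Filter.EventuallyEq.trans_isBigO ?_ (Asymptotics.isBigO_refl _ _)
    filter_upwards [Filter.eventually_le_atBot (-R)] with x hx
    have : abelP α 0 v x = 0 := by
      rw [abelP_apply]
      refine integral_eq_zero_of_ae (Filter.Eventually.of_forall fun t => ?_)
      by_cases ht : t ∈ Ioi (0:ℝ)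
      · have : (0:ℝ) < t := ht
        show abelK α 0 t * v (x - t) = 0
        rw [hR (x - t)]
        · simp
        · rw [Real.norm_eq_abs, abs_of_neg (by linarith)]; linarith
      · simp [abelK, ht]
    simp [this]
  · exact ⟨univ, Filter.univ_mem, by simp⟩
  · have hint : Integrable v := hv.integrable_of_hasCompactSupport hc
    refine Asymptotics.IsBigO.of_bound (((1/2:ℝ) ^ (-α) * ∫ s, v s) ^ 2) ?_
    filter_upwards [Filter.eventually_ge_atTop (2 * R)] with x hx
    have hx0 : 0 < x := by linarith
    have hnn' : 0 ≤ abelP α 0 v x := by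
      rw [abelP_apply]; exact integral_nonneg fun t => mul_nonneg (abelK_nonneg _ _ _) (hnn _)
    have hle : abelP α 0 v x ≤ ((1/2:ℝ) ^ (-α) * ∫ s, v s) * x ^ (-α) := by
      rw [abelP_apply, ← integral_sub_left_eq_self v volume x]
      rw [mul_right_comm, ← Real.mul_rpow (by norm_num) hx0.le, ← integral_const_mul]
      refine integral_mono (abelP_integrand hα1 0 hv hc x)
        ((hint.comp_sub_left x).const_mul _) fun t => ?_
      by_cases hxt : R ≤ |x - t|
      · simp [hR _ hxt]
      · refine mul_le_mul_of_nonneg_right ?_ (hnn _)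
        have : x / 2 ≤ t := by
          have := (abs_lt.mp (not_le.mp hxt)).2
          linarith
        have ht0 : 0 < t := by linarith
        simp only [abelK, mem_Ioi, ht0, indicator_of_mem]
        simp only [neg_zero, zero_mul, Real.exp_zero, mul_one]
        exact Real.rpow_le_rpow_of_nonpos (by linarith) (by linarith) (by linarith)
    have e : x ^ (-(2 * α)) = (x ^ (-α)) ^ 2 := by
      rw [← Real.rpow_natCast, ← Real.rpow_mul hx0.le]; congr 1; push_cast; ring
    rw [e, Real.norm_of_nonneg (by positivity), Real.norm_of_nonneg (by positivity), ← mul_pow]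
    exact pow_le_pow_left₀ hnn' hle 2
  · rw [integrableAtFilter_rpow_atTop_iff]; linarith

lemma laplace_gamma {α : ℝ} (hα1 : α < 1) {z : ℂ} (hz : 0 < z.re) :
    ∫ t in Ioi (0:ℝ), ((t ^ (-α) : ℝ) : ℂ) * Complex.exp (-(z * t))
      = (Real.Gamma (1 - α) : ℂ) * z ^ ((α - 1 : ℝ) : ℂ) := by
  set μ : Measure ℝ := (volume.restrict (Ioi 0)).withDensity (fun t => ENNReal.ofReal (t ^ (-α)))
    with hμ
  have hmeas : Measurable (fun t : ℝ => ENNReal.ofReal (t ^ (-α))) := by fun_prop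
  have hfin : ∀ᵐ t ∂(volume.restrict (Ioi (0:ℝ))), ENNReal.ofReal (t ^ (-α)) < ⊤ :=
    Filter.Eventually.of_forall fun t => ENNReal.ofReal_lt_top
  have key : ∀ w : ℂ, ProbabilityTheory.complexMGF (fun t : ℝ => -t) μ w =
      ∫ t in Ioi (0:ℝ), ((t ^ (-α) : ℝ) : ℂ) * Complex.exp (-(w * t)) := by
    intro w
    rw [ProbabilityTheory.complexMGF, hμ, integral_withDensity_eq_integral_toReal_smul hmeas hfin]
    refine setIntegral_congr_fun measurableSet_Ioi fun t ht => ?_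
    have : (0:ℝ) < t := ht
    simp only [ENNReal.toReal_ofReal (Real.rpow_nonneg this.le _)]
    simp
  have hsub : Ioi (0:ℝ) ⊆ ProbabilityTheory.integrableExpSet (fun t : ℝ => -t) μ := by
    intro r hr
    have hr' : (0:ℝ) < r := hr
    show Integrable _ _
    rw [hμ, integrable_withDensity_iff_integrable_smul' hmeas hfin]
    have := integrableOn_rpow_mul_exp_neg_mul_rpow (p := 1) (s := -α) (b := r)
      (by linarith) one_pos hr'
    refine this.congr_fun (fun t ht => ?_) measurableSet_Ioi
    have : (0:ℝ) < t := ht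
    simp only [ENNReal.toReal_ofReal (Real.rpow_nonneg this.le _)]
    simp
  have hint : Ioi (0:ℝ) ⊆ interior (ProbabilityTheory.integrableExpSet (fun t : ℝ => -t) μ) :=
    interior_maximal hsub isOpen_Ioi
  have hpre : IsPreconnected {w : ℂ | 0 < w.re} := (convex_halfSpace_re_gt 0).isPreconnected
  have hopen : IsOpen {w : ℂ | 0 < w.re} := isOpen_lt continuous_const Complex.continuous_re
  have hA : AnalyticOnNhd ℂ (ProbabilityTheory.complexMGF (fun t : ℝ => -t) μ) {w : ℂ | 0 < w.re} :=
    fun w hw => ProbabilityTheory.analyticAt_complexMGF (hint hw)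
  have hB : AnalyticOnNhd ℂ (fun w : ℂ => (Real.Gamma (1 - α) : ℂ) * w ^ ((α - 1 : ℝ) : ℂ))
      {w : ℂ | 0 < w.re} := by
    refine DifferentiableOn.analyticOnNhd (fun w hw => ?_) hopen
    refine DifferentiableAt.differentiableWithinAt ?_
    refine (DifferentiableAt.cpow_const ?_ ?_).const_mul _
    · exact differentiableAt_id
    · exact Or.inl hw
  have hreal : ∀ r : ℝ, 0 < r → ProbabilityTheory.complexMGF (fun t : ℝ => -t) μ r =
      (Real.Gamma (1 - α) : ℂ) * (r : ℂ) ^ ((α - 1 : ℝ) : ℂ) := by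
    intro r hr
    rw [key]
    have h := Complex.integral_cpow_mul_exp_neg_mul_Ioi (a := 1 - α) (r := r)
      (by simp; linarith) hr
    rw [show (1 - α : ℂ) = ((1 - α : ℝ) : ℂ) by push_cast; rfl, Complex.Gamma_ofReal] at h
    rw [mul_comm, show (r : ℂ) ^ ((α - 1 : ℝ) : ℂ) = (1 / (r : ℂ)) ^ ((1 - α : ℝ) : ℂ) by
      rw [one_div, Complex.inv_cpow _ _ (by rw [Complex.arg_ofReal_of_nonneg hr.le]; exact pi_pos.ne),
        ← Complex.cpow_neg]; congr 1; push_cast; ring]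
    rw [← h]
    refine setIntegral_congr_fun measurableSet_Ioi fun t ht => ?_
    have ht' : (0:ℝ) < t := ht
    rw [Complex.ofReal_cpow ht'.le]
    congr 2; push_cast; ring
  have hEq : EqOn _ _ _ := hA.eqOn_of_preconnected_of_frequently_eq hB hpre (z₀ := 1) (by simp) ?_
  · rw [← key]; exact hEq hz
  · have h1 : Filter.Tendsto (fun n : ℕ => ((1 + 1 / ((n:ℝ) + 1) : ℝ) : ℂ)) Filter.atTop
        (nhdsWithin (1:ℂ) {1}ᶜ) := by
      refine tendsto_nhdsWithin_iff.mpr ⟨?_, Filter.Eventually.of_forall fun n => ?_⟩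
      · have := (tendsto_one_div_add_atTop_nhds_zero_nat (𝕜 := ℝ)).const_add 1
        have h2 := (Complex.continuous_ofReal.tendsto _).comp this
        simpa [Function.comp_def] using h2
      · have : (0:ℝ) < 1 / ((n:ℝ) + 1) := by positivity
        simp only [mem_compl_iff, mem_singleton_iff]
        intro h
        have h3 := Complex.ofReal_injective (h.trans Complex.ofReal_one.symm)
        linarith
    refine h1.frequently (Filter.Frequently.of_forall fun n => ?_)
    exact hreal _ (by positivity)

/-- symbol -/
noncomputable def abelQ (α ε ξ : ℝ) : ℂ := ((ε : ℂ) + 2 * π * ξ * Complex.I) ^ ((α - 1 : ℝ) : ℂ)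

lemma fourier_abelK {α ε : ℝ} (hα1 : α < 1) (hε : 0 < ε) (ξ : ℝ) :
    𝓕 (fun t => (abelK α ε t : ℂ)) ξ = (Real.Gamma (1 - α) : ℂ) * abelQ α ε ξ := by
  have h := laplace_gamma hα1 (z := (ε : ℂ) + 2 * π * ξ * Complex.I) (by simpa using hε)
  unfold abelQ
  rw [← h, Real.fourier_eq', ← integral_indicator measurableSet_Ioi]
  congr 1; ext t
  by_cases ht : t ∈ Ioi (0:ℝ)
  · simp only [abelK, ht, indicator_of_mem, smul_eq_mul]
    push_cast
    rw [mul_left_comm, ← Complex.exp_add]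
    congr 2
    simp
    ring
  · simp [abelK, ht]

lemma abelQ_norm (α ε ξ : ℝ) : ‖abelQ α ε ξ‖ = ‖(ε : ℂ) + 2 * π * ξ * Complex.I‖ ^ (α - 1) := by
  unfold abelQ; rw [Complex.norm_cpow_real]

lemma abelQ_norm_le {α : ℝ} (hα1 : α < 1) (ε : ℝ) {ξ : ℝ} (hξ : ξ ≠ 0) :
    ‖abelQ α ε ξ‖ ≤ |2 * π * ξ| ^ (α - 1) := by
  rw [abelQ_norm]
  have : |2 * π * ξ| ≤ ‖(ε : ℂ) + 2 * π * ξ * Complex.I‖ := by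
    have := Complex.abs_im_le_norm ((ε : ℂ) + 2 * π * ξ * Complex.I)
    simpa using this
  exact Real.rpow_le_rpow_of_nonpos (by have := pi_pos; positivity) this (by linarith)

lemma abelQ_norm_le' {α ε : ℝ} (hα1 : α < 1) (hε : 0 < ε) (ξ : ℝ) :
    ‖abelQ α ε ξ‖ ≤ ε ^ (α - 1) := by
  rw [abelQ_norm]
  have : ε ≤ ‖(ε : ℂ) + 2 * π * ξ * Complex.I‖ := by
    have := Complex.re_le_norm ((ε : ℂ) + 2 * π * ξ * Complex.I)
    simpa using this
  exact Real.rpow_le_rpow_of_nonpos hε this (by linarith)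

lemma abelQ_measurable (α ε : ℝ) : Measurable (abelQ α ε) := by
  unfold abelQ; fun_prop

lemma abelQ_tendsto (α : ℝ) {ξ : ℝ} (hξ : ξ ≠ 0) :
    Filter.Tendsto (fun ε => abelQ α ε ξ) (nhdsWithin 0 (Ioi 0)) (nhds (abelQ α 0 ξ)) := by
  have : ContinuousAt (fun ε => abelQ α ε ξ) 0 := by
    unfold abelQ
    refine ContinuousAt.cpow (by fun_prop) (by fun_prop) ?_
    right
    simp [hξ, pi_ne_zero]
  exact this.tendsto.mono_left nhdsWithin_le_nhds

lemma parseval_neg {p q : ℝ → ℂ} (hp : Continuous p) (hpi : Integrable p) (hq : Integrable q)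
    (hP : Integrable (𝓕 p)) : ∫ x, p x * q (-x) = ∫ ξ, 𝓕 p ξ * 𝓕 q ξ := by
  have hinv := hp.fourierInv_fourier_eq hpi hP
  calc ∫ x, p x * q (-x) = ∫ x, 𝓕 (𝓕 p) (-x) * q (-x) := by
        congr 1; ext x
        rw [← Real.fourierInv_eq_fourier_neg, hinv]
    _ = ∫ x, 𝓕 (𝓕 p) x * q x := integral_neg_eq_self (fun x => 𝓕 (𝓕 p) x * q x) volume
    _ = ∫ ξ, 𝓕 p ξ * 𝓕 q ξ := by
        have := VectorFourier.integral_fourierIntegral_smul_eq_flip (L := innerₗ ℝ)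
          Real.continuous_fourierChar continuous_inner hP hq
        simpa using! this

lemma abelP_ofReal (α ε : ℝ) (v : ℝ → ℝ) : (fun x => (abelP α ε v x : ℂ)) =
    convolution (fun t => (abelK α ε t : ℂ)) (fun t => (v t : ℂ)) (ContinuousLinearMap.mul ℂ ℂ)
      volume := by
  ext x
  rw [abelP_apply, convolution_def, ← integral_complex_ofReal]
  simp

lemma abelP_integrable {α ε : ℝ} (hα1 : α < 1) (hε : 0 < ε) {v : ℝ → ℝ} (hv : Continuous v)
    (hc : HasCompactSupport v) : Integrable (abelP α ε v) :=
  (abelK_integrable hα1 hε).integrable_convolution _ (hv.integrable_of_hasCompactSupport hc)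

lemma fourier_abelP {α ε : ℝ} (hα1 : α < 1) (hε : 0 < ε) {v : ℝ → ℝ} (hv : Continuous v)
    (hc : HasCompactSupport v) (ξ : ℝ) :
    𝓕 (fun x => (abelP α ε v x : ℂ)) ξ =
      (Real.Gamma (1 - α) : ℂ) * abelQ α ε ξ * 𝓕 (fun x => (v x : ℂ)) ξ := by
  have h1 : Integrable (fun t => (abelK α ε t : ℂ)) := (abelK_integrable hα1 hε).ofReal
  have h2 : Integrable (fun t => (v t : ℂ)) := (hv.integrable_of_hasCompactSupport hc).ofReal
  rw [abelP_ofReal, Real.fourier_mul_convolution_eq h1 h2, fourier_abelK hα1 hε]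

lemma fourier_ofReal_comp_neg (v : ℝ → ℝ) (ξ : ℝ) :
    𝓕 (fun x => (v (-x) : ℂ)) ξ = 𝓕 (fun x => (v x : ℂ)) (-ξ) := by
  rw [← Real.fourierInv_eq_fourier_neg, Real.fourierInv_eq_fourier_comp_neg]

lemma fourier_ofReal_neg (v : ℝ → ℝ) (ξ : ℝ) :
    𝓕 (fun x => (v x : ℂ)) (-ξ) = (starRingEnd ℂ) (𝓕 (fun x => (v x : ℂ)) ξ) := by
  rw [Real.fourier_eq', Real.fourier_eq', ← integral_conj]
  congr 1; ext t
  simp only [smul_eq_mul, map_mul, Complex.conj_ofReal, ← Complex.exp_conj, Complex.conj_I]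
  congr 2
  simp

lemma fourier_schwartz {v : ℝ → ℝ} (hv : ContDiff ℝ (⊤ : ℕ∞) v) (hc : HasCompactSupport v) :
    ∃ V : SchwartzMap ℝ ℂ, (𝓕 (fun x => (v x : ℂ)) : ℝ → ℂ) = V := by
  have hc' : HasCompactSupport (fun x => (v x : ℂ)) := hc.comp_left (g := Complex.ofReal) (by simp)
  have hv' : ContDiff ℝ (⊤ : ℕ∞) (fun x => (v x : ℂ)) := Complex.ofRealCLM.contDiff.comp hv
  refine ⟨𝓕 (hc'.toSchwartzMap hv'), ?_⟩
  rw [SchwartzMap.fourier_coe]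
  rfl

/-- integrability of the limiting weight -/
lemma weight_integrable {α : ℝ} (hα0 : 1 / 2 < α) (hα1 : α < 1) (V : SchwartzMap ℝ ℂ) :
    Integrable (fun ξ : ℝ => |2 * π * ξ| ^ (2 * α - 2) * ‖V ξ‖ ^ 2) := by
  have hV : Integrable (fun ξ => ‖V ξ‖ ^ 2) := by
    have := V.memLp 2 (volume : Measure ℝ)
    exact this.integrable_norm_pow (by norm_num)
  have hc : Continuous (fun ξ => ‖V ξ‖ ^ 2) := by fun_prop
  have hm : Measurable (fun ξ : ℝ => |2 * π * ξ| ^ (2 * α - 2)) := by fun_prop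
  rw [← integrableOn_univ, ← union_compl_self (Icc (-1:ℝ) 1)]
  refine IntegrableOn.union ?_ ?_
  · refine IntegrableOn.mul_continuousOn ?_ hc.continuousOn isCompact_Icc
    have h1 : IntervalIntegrable (fun x : ℝ => |x| ^ (2 * α - 2)) volume (-1) 1 := by
      have h2 : IntervalIntegrable (fun x : ℝ => |x| ^ (2 * α - 2)) volume 0 1 := by
        refine (intervalIntegral.intervalIntegrable_rpow' (a := 0) (b := 1) (r := 2 * α - 2)
          (by linarith)).congr ?_
        intro x hx
        rw [uIoc_of_le zero_le_one] at hx
        simp [abs_of_pos hx.1]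
      have h3 : IntervalIntegrable (fun x : ℝ => |x| ^ (2 * α - 2)) volume (-1) 0 := by
        rw [IntervalIntegrable.iff_comp_neg]
        simpa using h2.symm
      exact h3.trans h2
    have h4 := (intervalIntegrable_iff_integrableOn_Icc_of_le (by norm_num)).mp h1
    have h5 := h4.const_mul ((2 * π) ^ (2 * α - 2))
    refine Integrable.congr h5 (Filter.Eventually.of_forall fun x => ?_)
    simp only
    rw [abs_mul, abs_of_pos (by have := pi_pos; positivity : 0 < 2 * π),
      Real.mul_rpow (by have := pi_pos; positivity) (abs_nonneg _)]
  · refine Integrable.mono' hV.integrableOn (hm.mul hc.measurable).aestronglyMeasurable ?_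
    refine (ae_restrict_iff' measurableSet_Icc.compl).mpr (Filter.Eventually.of_forall fun x hx => ?_)
    rw [Real.norm_of_nonneg (by positivity)]
    refine mul_le_of_le_one_left (by positivity) ?_
    refine Real.rpow_le_one_of_one_le_of_nonpos ?_ (by linarith)
    have h1 : 1 ≤ |x| := by
      by_contra h
      exact hx (abs_le.mp (not_le.mp h).le)
    rw [abs_mul, abs_of_pos (by have := pi_pos; positivity : 0 < 2 * π)]
    nlinarith [pi_gt_three]

lemma abelP_mul_tendsto {α : ℝ} (hα0 : 1 / 2 < α) (hα1 : α < 1) {v w : ℝ → ℝ}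
    (hv : Continuous v) (hvc : HasCompactSupport v) (hw : Continuous w) (hwc : HasCompactSupport w)
    {s : ℝ} (hs : s ≠ 0) :
    Filter.Tendsto (fun ε => ∫ x, abelP α ε v x * abelP α ε w (s * x)) (nhdsWithin 0 (Ioi 0))
      (nhds (∫ x, abelP α 0 v x * abelP α 0 w (s * x))) := by
  have hA := abelP_sq_integrable hα0 hα1 hv.abs hvc.abs (fun x => abs_nonneg _)
  have hB := (abelP_sq_integrable hα0 hα1 hw.abs hwc.abs (fun x => abs_nonneg _)).comp_mul_left' hs
  refine tendsto_integral_filter_of_dominated_convergence _ ?_ ?_ (hA.add hB) ?_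
  · refine Filter.Eventually.of_forall fun ε => Continuous.aestronglyMeasurable ?_
    exact (abelP_continuous hα1 ε hv hvc).mul
      ((abelP_continuous hα1 ε hw hwc).comp (by fun_prop))
  · filter_upwards [self_mem_nhdsWithin] with ε hε
    refine Filter.Eventually.of_forall fun x => ?_
    have h1 := abelP_abs_le hα1 (le_of_lt hε) hv hvc x
    have h2 := abelP_abs_le hα1 (le_of_lt hε) hw hwc (s * x)
    rw [norm_mul, Real.norm_eq_abs, Real.norm_eq_abs]
    have h3 := mul_le_mul h1 h2 (abs_nonneg _) ((abs_nonneg _).trans h1)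
    refine h3.trans ?_
    simp only [Pi.add_apply]
    nlinarith [sq_nonneg (abelP α 0 (fun y => |v y|) x - abelP α 0 (fun y => |w y|) (s * x)),
      sq_nonneg (abelP α 0 (fun y => |v y|) x), sq_nonneg (abelP α 0 (fun y => |w y|) (s * x))]
  · exact Filter.Eventually.of_forall fun x =>
      (abelP_tendsto hα1 hv hvc x).mul (abelP_tendsto hα1 hw hwc (s * x))

lemma abelQ_mul_bound {α : ℝ} (hα1 : α < 1) (V : SchwartzMap ℝ ℂ) (ε : ℝ)
    {s : ℝ} (hs : |s| = 1) {ξ : ℝ} (hξ : ξ ≠ 0) :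
    ‖abelQ α ε ξ * abelQ α ε (s * ξ) * ((‖V ξ‖ ^ 2 : ℝ) : ℂ)‖ ≤
      |2 * π * ξ| ^ (2 * α - 2) * ‖V ξ‖ ^ 2 := by
  have hs0 : s ≠ 0 := by rintro rfl; simp at hs
  have h1 := abelQ_norm_le hα1 ε hξ
  have h2 := abelQ_norm_le hα1 ε (mul_ne_zero hs0 hξ)
  have e : |2 * π * (s * ξ)| = |2 * π * ξ| := by
    rw [mul_left_comm, abs_mul, hs, one_mul]
  rw [e] at h2
  have hpos : 0 < |2 * π * ξ| := by have := pi_pos; positivity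
  rw [norm_mul, norm_mul, Complex.norm_real, Real.norm_of_nonneg (by positivity : 0 ≤ ‖V ξ‖ ^ 2),
    show 2 * α - 2 = (α - 1) + (α - 1) by ring, Real.rpow_add hpos]
  exact mul_le_mul_of_nonneg_right (mul_le_mul h1 h2 (norm_nonneg _) (by positivity))
    (by positivity)

lemma abelQ_mul_meas (α : ℝ) (V : SchwartzMap ℝ ℂ) (ε s : ℝ) :
    AEStronglyMeasurable (fun ξ => abelQ α ε ξ * abelQ α ε (s * ξ) * ((‖V ξ‖ ^ 2 : ℝ) : ℂ)) := by
  have h1 := abelQ_measurable α ε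
  have h2 : Measurable (fun ξ => abelQ α ε (s * ξ)) := h1.comp (by fun_prop)
  have h3 : Continuous (fun ξ => ((‖V ξ‖ ^ 2 : ℝ) : ℂ)) := by fun_prop
  exact ((h1.mul h2).mul h3.measurable).aestronglyMeasurable

lemma ae_ne_zero' : ∀ᵐ ξ : ℝ, ξ ≠ 0 := Measure.ae_ne volume 0

lemma abelQ_mul_integrable {α : ℝ} (hα0 : 1 / 2 < α) (hα1 : α < 1) (V : SchwartzMap ℝ ℂ) (ε : ℝ)
    {s : ℝ} (hs : |s| = 1) :
    Integrable (fun ξ => abelQ α ε ξ * abelQ α ε (s * ξ) * ((‖V ξ‖ ^ 2 : ℝ) : ℂ)) := by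
  refine Integrable.mono' (weight_integrable hα0 hα1 V) (abelQ_mul_meas α V ε s) ?_
  filter_upwards [ae_ne_zero'] with ξ hξ using abelQ_mul_bound hα1 V ε hs hξ

lemma abelQ_mul_tendsto {α : ℝ} (hα0 : 1 / 2 < α) (hα1 : α < 1) (V : SchwartzMap ℝ ℂ)
    {s : ℝ} (hs : |s| = 1) :
    Filter.Tendsto (fun ε => ∫ ξ, abelQ α ε ξ * abelQ α ε (s * ξ) * ((‖V ξ‖ ^ 2 : ℝ) : ℂ))
      (nhdsWithin 0 (Ioi 0))
      (nhds (∫ ξ, abelQ α 0 ξ * abelQ α 0 (s * ξ) * ((‖V ξ‖ ^ 2 : ℝ) : ℂ))) := by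
  have hs0 : s ≠ 0 := by rintro rfl; simp at hs
  refine tendsto_integral_filter_of_dominated_convergence _
    (Filter.Eventually.of_forall fun ε => abelQ_mul_meas α V ε s) ?_
    (weight_integrable hα0 hα1 V) ?_
  · refine Filter.Eventually.of_forall fun ε => ?_
    filter_upwards [ae_ne_zero'] with ξ hξ using abelQ_mul_bound hα1 V ε hs hξ
  · filter_upwards [ae_ne_zero'] with ξ hξ
    exact ((abelQ_tendsto α hξ).mul (abelQ_tendsto α (mul_ne_zero hs0 hξ))).mul_const _

lemma fourier_abelP_integrable {α ε : ℝ} (hα1 : α < 1) (hε : 0 < ε) {v : ℝ → ℝ}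
    (hv : Continuous v) (hc : HasCompactSupport v) {V : SchwartzMap ℝ ℂ}
    (hV : (𝓕 (fun x => (v x : ℂ)) : ℝ → ℂ) = V) :
    Integrable (𝓕 (fun x => (abelP α ε v x : ℂ)) : ℝ → ℂ) := by
  have : (𝓕 (fun x => (abelP α ε v x : ℂ)) : ℝ → ℂ) =
      fun ξ => ((Real.Gamma (1 - α) : ℂ) * abelQ α ε ξ) * V ξ := by
    ext ξ; rw [fourier_abelP hα1 hε hv hc, hV]
  rw [this]
  refine V.integrable.bdd_mul (c := ‖(Real.Gamma (1 - α) : ℂ)‖ * ε ^ (α - 1)) ?_ ?_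
  · exact ((abelQ_measurable α ε).const_mul _).aestronglyMeasurable
  · refine Filter.Eventually.of_forall fun ξ => ?_
    rw [norm_mul]
    exact mul_le_mul_of_nonneg_left (abelQ_norm_le' hα1 hε ξ) (norm_nonneg _)

lemma conj_mul_norm (z : ℂ) : z * (starRingEnd ℂ) z = ((‖z‖ ^ 2 : ℝ) : ℂ) := by
  rw [Complex.mul_conj, Complex.normSq_eq_norm_sq]

/-- regularised identities -/
lemma reg_identity₁ {α ε : ℝ} (hα1 : α < 1) (hε : 0 < ε) {v : ℝ → ℝ}
    (hv : Continuous v) (hc : HasCompactSupport v) {V : SchwartzMap ℝ ℂ}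
    (hV : (𝓕 (fun x => (v x : ℂ)) : ℝ → ℂ) = V) :
    ((∫ x, abelP α ε v x * abelP α ε (fun y => v (-y)) (-1 * x) : ℝ) : ℂ) =
      (Real.Gamma (1 - α) : ℂ) ^ 2 *
        ∫ ξ, abelQ α ε ξ * abelQ α ε (1 * ξ) * ((‖V ξ‖ ^ 2 : ℝ) : ℂ) := by
  have hc' : HasCompactSupport (fun y => v (-y)) := hc.comp_homeomorph (Homeomorph.neg ℝ)
  have hv' : Continuous (fun y => v (-y)) := by fun_prop
  have h := parseval_neg (p := fun x => (abelP α ε v x : ℂ))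
    (q := fun x => (abelP α ε (fun y => v (-y)) x : ℂ))
    (Complex.continuous_ofReal.comp (abelP_continuous hα1 ε hv hc))
    (abelP_integrable hα1 hε hv hc).ofReal (abelP_integrable hα1 hε hv' hc').ofReal
    (fourier_abelP_integrable hα1 hε hv hc hV)
  rw [← integral_complex_ofReal, ← integral_const_mul]
  simp only [neg_mul, one_mul]
  push_cast
  rw [h]
  congr 1; ext ξ
  rw [fourier_abelP hα1 hε hv hc, fourier_abelP hα1 hε hv' hc', fourier_ofReal_comp_neg,
    fourier_ofReal_neg, hV]
  have := conj_mul_norm (V ξ)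
  push_cast at this
  rw [← this]; ring

lemma reg_identity₂ {α ε : ℝ} (hα1 : α < 1) (hε : 0 < ε) {v : ℝ → ℝ}
    (hv : Continuous v) (hc : HasCompactSupport v) {V : SchwartzMap ℝ ℂ}
    (hV : (𝓕 (fun x => (v x : ℂ)) : ℝ → ℂ) = V) :
    ((∫ x, abelP α ε v x * abelP α ε v (1 * x) : ℝ) : ℂ) =
      (Real.Gamma (1 - α) : ℂ) ^ 2 *
        ∫ ξ, abelQ α ε ξ * abelQ α ε (-1 * ξ) * ((‖V ξ‖ ^ 2 : ℝ) : ℂ) := by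
  have h := parseval_neg (p := fun x => (abelP α ε v x : ℂ))
    (q := fun x => (abelP α ε v (-x) : ℂ))
    (Complex.continuous_ofReal.comp (abelP_continuous hα1 ε hv hc))
    (abelP_integrable hα1 hε hv hc).ofReal (abelP_integrable hα1 hε hv hc).comp_neg.ofReal
    (fourier_abelP_integrable hα1 hε hv hc hV)
  rw [← integral_complex_ofReal, ← integral_const_mul]
  simp only [neg_mul, one_mul]
  simp only [neg_neg] at h
  push_cast
  rw [h]
  congr 1; ext ξ
  rw [fourier_ofReal_comp_neg (abelP α ε v), fourier_abelP hα1 hε hv hc, fourier_abelP hα1 hε hv hc,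
    fourier_ofReal_neg, hV]
  have := conj_mul_norm (V ξ)
  push_cast at this
  rw [← this]; ring

lemma lim_identity₁ {α : ℝ} (hα0 : 1 / 2 < α) (hα1 : α < 1) {v : ℝ → ℝ}
    (hv : Continuous v) (hc : HasCompactSupport v) {V : SchwartzMap ℝ ℂ}
    (hV : (𝓕 (fun x => (v x : ℂ)) : ℝ → ℂ) = V) :
    ((∫ x, abelP α 0 v x * abelP α 0 (fun y => v (-y)) (-1 * x) : ℝ) : ℂ) =
      (Real.Gamma (1 - α) : ℂ) ^ 2 *
        ∫ ξ, abelQ α 0 ξ * abelQ α 0 (1 * ξ) * ((‖V ξ‖ ^ 2 : ℝ) : ℂ) := by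
  have hc' : HasCompactSupport (fun y => v (-y)) := hc.comp_homeomorph (Homeomorph.neg ℝ)
  have hv' : Continuous (fun y => v (-y)) := by fun_prop
  have h1 := (Complex.continuous_ofReal.tendsto _).comp
    (abelP_mul_tendsto hα0 hα1 hv hc hv' hc' (s := -1) (by norm_num))
  have h2 := (abelQ_mul_tendsto hα0 hα1 V (s := 1) (by norm_num)).const_mul
    ((Real.Gamma (1 - α) : ℂ) ^ 2)
  refine tendsto_nhds_unique (h1.congr' ?_) h2
  filter_upwards [self_mem_nhdsWithin] with ε hε using reg_identity₁ hα1 hε hv hc hV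

lemma lim_identity₂ {α : ℝ} (hα0 : 1 / 2 < α) (hα1 : α < 1) {v : ℝ → ℝ}
    (hv : Continuous v) (hc : HasCompactSupport v) {V : SchwartzMap ℝ ℂ}
    (hV : (𝓕 (fun x => (v x : ℂ)) : ℝ → ℂ) = V) :
    ((∫ x, abelP α 0 v x * abelP α 0 v (1 * x) : ℝ) : ℂ) =
      (Real.Gamma (1 - α) : ℂ) ^ 2 *
        ∫ ξ, abelQ α 0 ξ * abelQ α 0 (-1 * ξ) * ((‖V ξ‖ ^ 2 : ℝ) : ℂ) := by
  have h1 := (Complex.continuous_ofReal.tendsto _).comp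
    (abelP_mul_tendsto hα0 hα1 hv hc hv hc (s := 1) (by norm_num))
  have h2 := (abelQ_mul_tendsto hα0 hα1 V (s := -1) (by norm_num)).const_mul
    ((Real.Gamma (1 - α) : ℂ) ^ 2)
  refine tendsto_nhds_unique (h1.congr' ?_) h2
  filter_upwards [self_mem_nhdsWithin] with ε hε using reg_identity₂ hα1 hε hv hc hV

lemma abelQ_zero (α : ℝ) {ξ : ℝ} (hξ : ξ ≠ 0) :
    abelQ α 0 ξ = Complex.exp (((α - 1) * Real.log |2 * π * ξ| : ℝ) +
      ((α - 1) * (SignType.sign ξ * (π / 2)) : ℝ) * Complex.I) := by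
  have hpi := pi_pos
  have hz : (((0:ℝ) : ℂ) + 2 * π * ξ * Complex.I) ≠ 0 := by simp [hξ, pi_ne_zero]
  have hn : ‖((0:ℝ) : ℂ) + 2 * π * ξ * Complex.I‖ = |2 * π * ξ| := by
    simp [abs_mul]
  have ha : Complex.arg (((0:ℝ) : ℂ) + 2 * π * ξ * Complex.I) = SignType.sign ξ * (π / 2) := by
    rcases lt_or_gt_of_ne hξ with h | h
    · have : ((0:ℝ) : ℂ) + 2 * π * ξ * Complex.I = ((2 * π * -ξ : ℝ) : ℂ) * (-Complex.I) := by
        push_cast; ring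
      rw [this, Complex.arg_real_mul _ (by have := neg_pos.mpr h; positivity), Complex.arg_neg_I]
      simp [sign_neg h, neg_div]
    · have : ((0:ℝ) : ℂ) + 2 * π * ξ * Complex.I = ((2 * π * ξ : ℝ) : ℂ) * (Complex.I) := by
        push_cast; ring
      rw [this, Complex.arg_real_mul _ (by positivity), Complex.arg_I]
      simp [sign_pos h]
  unfold abelQ
  rw [Complex.cpow_def_of_ne_zero hz, Complex.log, hn, ha]
  congr 1
  push_cast
  ring

lemma abelQ_mul_neg (α : ℝ) {ξ : ℝ} (hξ : ξ ≠ 0) :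
    abelQ α 0 ξ * abelQ α 0 (-1 * ξ) = ((|2 * π * ξ| ^ (2 * α - 2) : ℝ) : ℂ) := by
  have hpos : 0 < |2 * π * ξ| := by have := pi_pos; positivity
  rw [abelQ_zero α hξ, abelQ_zero α (by simpa using hξ : -1 * ξ ≠ 0), ← Complex.exp_add,
    Real.rpow_def_of_pos hpos, Complex.ofReal_exp]
  have e : |2 * π * (-1 * ξ)| = |2 * π * ξ| := by
    rw [← abs_neg]; congr 1; ring
  rw [e, show -1 * ξ = -ξ by ring, Left.sign_neg]
  congr 1
  push_cast
  ring

lemma abelQ_sq_re (α : ℝ) {ξ : ℝ} (hξ : ξ ≠ 0) :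
    (abelQ α 0 ξ * abelQ α 0 (1 * ξ)).re = -Real.cos (α * π) * |2 * π * ξ| ^ (2 * α - 2) := by
  have hpos : 0 < |2 * π * ξ| := by have := pi_pos; positivity
  rw [one_mul, abelQ_zero α hξ, ← Complex.exp_add, Real.rpow_def_of_pos hpos, Complex.exp_re]
  have hc : Real.cos ((α - 1) * π) = -Real.cos (α * π) := by
    rw [sub_mul, one_mul, Real.cos_sub_pi]
  rw [← hc, mul_comm]
  congr 1
  · rcases lt_or_gt_of_ne hξ with h | h
    · rw [← Real.cos_neg]; simp [sign_neg h]; congr 1; ring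
    · simp [sign_pos h]; congr 1; ring
  · simp; ring

lemma cos_neg_of {α : ℝ} (hα0 : 1 / 2 < α) (hα1 : α < 1) : Real.cos (α * π) < 0 := by
  have := pi_pos
  exact Real.cos_neg_of_pi_div_two_lt_of_lt (by nlinarith) (by nlinarith)

/-- Coercivity of the Riesz fractional bilinear form in Fourier form: for
`α ∈ (1/2,1)`, `c_α = 1/(2cos(απ))` and `u` smooth with compact support,
`a(u,u) = 2 c_α ({}_{-∞}D_x^α u, {}_xD_∞^α u) = ‖{}_{-∞}D_x^α u‖² ≥ 0`,
with equality iff `u = 0`. -/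
theorem riesz_bilinear_coercive
    (α : ℝ) (u : ℝ → ℝ)
    (hα0 : 1 / 2 < α) (hα1 : α < 1)
    (hu : ContDiff ℝ (⊤ : ℕ∞) u) (hsupp : HasCompactSupport u) :
    (2 * (1 / (2 * Real.cos (α * Real.pi))) *
        ∫ x : ℝ, leftFracDerivR α u x * rightFracDerivR α u x)
      = (∫ x : ℝ, (leftFracDerivR α u x) ^ 2) ∧
    0 ≤ (∫ x : ℝ, (leftFracDerivR α u x) ^ 2) ∧
    ((∫ x : ℝ, (leftFracDerivR α u x) ^ 2) = 0 ↔ u = 0) := by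
  have hcos := cos_neg_of hα0 hα1
  have hΓ : 0 < Real.Gamma (1 - α) := Real.Gamma_pos_of_pos (by linarith)
  have hv : ContDiff ℝ (⊤ : ℕ∞) (deriv u) := by
    have : ContDiff ℝ ((⊤ : ℕ∞) + 1) u := hu
    exact ((contDiff_succ_iff_deriv).mp this).2.2
  have hvc : HasCompactSupport (deriv u) := hsupp.deriv
  obtain ⟨V, hV⟩ := fourier_schwartz hv hvc
  set J : ℝ := ∫ ξ, |2 * π * ξ| ^ (2 * α - 2) * ‖V ξ‖ ^ 2 with hJ
  have hI2 : ∫ x, abelP α 0 (deriv u) x * abelP α 0 (deriv u) (1 * x)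
      = Real.Gamma (1 - α) ^ 2 * J := by
    have h := lim_identity₂ hα0 hα1 hv.continuous hvc hV
    have h2 : ∫ ξ, abelQ α 0 ξ * abelQ α 0 (-1 * ξ) * ((‖V ξ‖ ^ 2 : ℝ) : ℂ) = (J : ℂ) := by
      rw [hJ, ← integral_complex_ofReal]
      refine integral_congr_ae ?_
      filter_upwards [ae_ne_zero'] with ξ hξ
      rw [abelQ_mul_neg α hξ, ← Complex.ofReal_mul]
    rw [h2] at h
    exact_mod_cast h
  have hI1 : ∫ x, abelP α 0 (deriv u) x * abelP α 0 (fun y => deriv u (-y)) (-1 * x)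
      = -Real.cos (α * π) * (Real.Gamma (1 - α) ^ 2 * J) := by
    have h := congrArg Complex.re (lim_identity₁ hα0 hα1 hv.continuous hvc hV)
    have hint := abelQ_mul_integrable hα0 hα1 V 0 (s := 1) (by norm_num)
    have h2 : (∫ ξ, abelQ α 0 ξ * abelQ α 0 (1 * ξ) * ((‖V ξ‖ ^ 2 : ℝ) : ℂ)).re
        = -Real.cos (α * π) * J := by
      rw [← Complex.reCLM_apply, ← Complex.reCLM.integral_comp_comm hint, hJ, ← integral_const_mul]
      refine integral_congr_ae ?_
      filter_upwards [ae_ne_zero'] with ξ hξ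
      rw [Complex.reCLM_apply, Complex.re_mul_ofReal, abelQ_sq_re α hξ]
      ring
    rw [← Complex.ofReal_pow, Complex.re_ofReal_mul, h2, Complex.ofReal_re] at h
    rw [h]; ring
  have hleft : (∫ x : ℝ, (leftFracDerivR α u x) ^ 2) = J := by
    have : ∀ x, (leftFracDerivR α u x) ^ 2 = (1 / Real.Gamma (1 - α)) ^ 2 *
        (abelP α 0 (deriv u) x * abelP α 0 (deriv u) (1 * x)) := by
      intro x; rw [left_eq hα1 hu hsupp, one_mul]; ring
    simp_rw [this]
    rw [integral_const_mul, hI2]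
    field_simp
  have hright : (∫ x : ℝ, leftFracDerivR α u x * rightFracDerivR α u x) =
      Real.cos (α * π) * J := by
    have : ∀ x, leftFracDerivR α u x * rightFracDerivR α u x = -(1 / Real.Gamma (1 - α)) ^ 2 *
        (abelP α 0 (deriv u) x * abelP α 0 (fun y => deriv u (-y)) (-1 * x)) := by
      intro x; rw [left_eq hα1 hu hsupp, right_eq hα1 hu hsupp, neg_one_mul]; ring
    simp_rw [this]
    rw [integral_const_mul, hI1]
    field_simp
  have hJnn : 0 ≤ J := integral_nonneg fun ξ => by positivity
  rw [hleft, hright]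
  refine ⟨by field_simp [hcos.ne], hJnn, ?_, ?_⟩
  · intro hJ0
    rw [hJ, integral_eq_zero_iff_of_nonneg (fun ξ => by positivity)
      (weight_integrable hα0 hα1 V)] at hJ0
    have hV0 : (V : ℝ → ℂ) =ᵐ[volume] fun _ => (0:ℂ) := by
      filter_upwards [hJ0, ae_ne_zero'] with ξ h hξ
      have hpos : 0 < |2 * π * ξ| := by have := pi_pos; positivity
      have hpos' := Real.rpow_pos_of_pos hpos (2 * α - 2)
      have h' : |2 * π * ξ| ^ (2 * α - 2) * ‖V ξ‖ ^ 2 = 0 := h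
      rcases mul_eq_zero.mp h' with h1 | h1
      · exact absurd h1 hpos'.ne'
      · simpa using h1
    have hV1 : (V : ℝ → ℂ) = fun _ => (0:ℂ) :=
      (Continuous.ae_eq_iff_eq volume V.continuous continuous_const).mp hV0
    have hVi : Integrable (𝓕 (fun x => ((deriv u x : ℝ) : ℂ)) : ℝ → ℂ) := by
      rw [hV]; exact V.integrable
    have hinv := Continuous.fourierInv_fourier_eq (f := fun x => ((deriv u x : ℝ) : ℂ))
      (Complex.continuous_ofReal.comp hv.continuous)
      (hv.continuous.integrable_of_hasCompactSupport hvc).ofReal hVi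
    have hd : ∀ x, deriv u x = 0 := by
      intro x
      have h := congrFun hinv x
      rw [hV, hV1, Real.fourierInv_eq'] at h
      simpa using h.symm
    have hdiff : Differentiable ℝ u := hu.differentiable (by simp)
    obtain ⟨R, hR0, hR⟩ := hsupp.exists_pos_le_norm
    ext x
    rw [is_const_of_deriv_eq_zero hdiff hd x R, hR R (le_abs_self R)]
    rfl
  · rintro rfl
    rw [← hleft]
    simp [leftFracDerivR]
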